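/- arXiv:math/0008076 — 2 statements merged into one kernel-verified Lean document; each statement's English description precedes it below -/
import Mathlib

section
/- Let K be a CM field with CM-type Σ and let V be a rational Hodge structure of weight k of CM-type with field K. Equip K with the weight-one Hodge structure K_{-1/2} defined by (K_{-1/2})^{1,0} := ⊕_{σ∈Σ} K_σ and (K_{-1/2})^{0,1} := ⊕_{σ∈Σ̄} K_σ (subspaces of K ⊗_ℚ ℂ), and equip V ⊗_ℚ K with the tensor product Hodge structure of weight k+1. Then V' := {w ∈ V ⊗_ℚ K : (x ⊗ 1)w = (1 ⊗ x)w for all x ∈ K} is a sub-Hodge structure of V ⊗_ℚ K_{-1/2}, and its induced Hodge decomposition is (V')^{r,s} = (⊕_{σ∈Σ} V^{r-1,s}_σ ⊗ K_σ) ⊕ (⊕_{σ∈Σ̄} V^{r,s-1}_σ ⊗ K_σ); in particular dim_ℂ (V')^{r,s} = dim_ℂ V^{r-1,s}_Σ + dim_ℂ V^{r,s-1}_{Σ̄}, i.e., V' is isomorphic to the negative half twist V_{-1/2}. -/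
/-!
The algebra `K_ℂ = ℂ ⊗ K` is the product of copies of `ℂ` indexed by the embeddings `σ : K → ℂ`
(`embEquiv`), so it has primitive idempotents `e_σ` (`idem`) with sum `1`. It acts on `V_ℂ` (`actC`);
`e_σ` acts as the projector onto `V_σ`, preserving every `K`-stable subspace such as `V^{p,q}`, and
`K_σ` is the line spanned by `e_σ`.

Since `V'` is the kernel of a single rational operator `θ ⊗ 1 - 1 ⊗ θ`, with `θ` a primitive element,
flatness of `ℂ` over `ℚ` shows that `V'_ℂ` is cut out by the equations `(x ⊗ 1)w = (1 ⊗ x)w`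
(`mem_VprimeC`). Hence `E = ∑_σ e_σ ⊗ e_σ` (`projE`) fixes `V'_ℂ`, and `V_σ ⊗ K_σ ⊆ V'_ℂ`. For
`k ∈ K_σ` one has `E (v ⊗ k) = e_σ v ⊗ k`, so `E` carries each Hodge summand of `V ⊗ K_{-1/2}` into the
claimed piece of `V'` (`map_projE_le`); this gives both the decomposition and the description of its
pieces. For the dimensions, `v ↦ ∑_σ e_σ v ⊗ e_σ` (`embF`) is injective and carries
`V^{r-1,s}_Σ ⊕ V^{r,s-1}_Σ̄` onto the `(r,s)` piece (`VprimePiece_eq_map`).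
-/


open scoped TensorProduct
open Module

noncomputable section

/-- Scalar multiplication by `x : K` on `V`, as a `ℚ`-linear map. -/
def smulQ (K : Type*) [Field K] [Algebra ℚ K]
    (V : Type*) [AddCommGroup V] [Module ℚ V] [Module K V] [IsScalarTower ℚ K V]
    (x : K) : V →ₗ[ℚ] V where
  toFun v := x • v
  map_add' := by simp
  map_smul' q v := smul_comm x q v

/-- The `ℂ`-linear extension of the action of `x : K` to the
complexification `V_ℂ = ℂ ⊗_ℚ V`. -/
def actK (K : Type*) [Field K] [Algebra ℚ K]
    (V : Type*) [AddCommGroup V] [Module ℚ V] [Module K V] [IsScalarTower ℚ K V]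
    (x : K) : (ℂ ⊗[ℚ] V) →ₗ[ℂ] (ℂ ⊗[ℚ] V) :=
  LinearMap.baseChange ℂ (smulQ K V x)

/-- The eigenspace `V_σ = {v ∈ V_ℂ : x•v = σ(x)v for all x ∈ K}` attached to an
embedding `σ : K → ℂ`. -/
def Vsig (K : Type*) [Field K] [Algebra ℚ K]
    (V : Type*) [AddCommGroup V] [Module ℚ V] [Module K V] [IsScalarTower ℚ K V]
    (σ : K →+* ℂ) : Submodule ℂ (ℂ ⊗[ℚ] V) :=
  ⨅ x : K, LinearMap.ker (actK K V x - σ x • LinearMap.id)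

/-- The conjugation map `c = id_V ⊗ (complex conjugation)` on `V_ℂ = ℂ ⊗_ℚ V`,
as a `ℚ`-linear map. -/
def cmap (V : Type*) [AddCommGroup V] [Module ℚ V] :
    (ℂ ⊗[ℚ] V) →ₗ[ℚ] (ℂ ⊗[ℚ] V) :=
  TensorProduct.map (Complex.conjAe.toLinearMap.restrictScalars ℚ) LinearMap.id

/-- `V^{p,q}_T := ⊕_{σ ∈ T} (V^{p,q} ∩ V_σ)` for a set `T` of embeddings. -/
def VpqT (K : Type*) [Field K] [Algebra ℚ K]
    (V : Type*) [AddCommGroup V] [Module ℚ V] [Module K V] [IsScalarTower ℚ K V]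
    (Vpq : ℕ → ℕ → Submodule ℂ (ℂ ⊗[ℚ] V)) (T : Set (K →+* ℂ)) (p q : ℕ) :
    Submodule ℂ (ℂ ⊗[ℚ] V) :=
  ⨆ σ ∈ T, (Vpq p q ⊓ Vsig K V σ)

/-- The weight-one Hodge structure `K_{-1/2}` attached to the CM-type `Σ`:
`(K_{-1/2})^{1,0} = ⊕_{σ∈Σ} K_σ` and `(K_{-1/2})^{0,1} = ⊕_{σ∈Σ̄} K_σ`. -/
def KnegHalf (K : Type*) [Field K] [Algebra ℚ K] (Sg : Set (K →+* ℂ)) (p q : ℕ) :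
    Submodule ℂ (ℂ ⊗[ℚ] K) :=
  if p = 1 ∧ q = 0 then ⨆ σ ∈ Sg, Vsig K K σ
  else if p = 0 ∧ q = 1 then ⨆ σ ∈ {σ : K →+* ℂ | (starRingEnd ℂ).comp σ ∈ Sg}, Vsig K K σ
  else ⊥

/-- The `(r,s)`-piece of the tensor product Hodge structure on
`V_ℂ ⊗_ℂ (K ⊗_ℚ ℂ)`:  `⊕_{p+p'=r, q+q'=s} V^{p,q} ⊗ (K_{-1/2})^{p',q'}`. -/
def tensorPiece (K : Type*) [Field K] [Algebra ℚ K]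
    (V : Type*) [AddCommGroup V] [Module ℚ V] [Module K V] [IsScalarTower ℚ K V]
    (Vpq : ℕ → ℕ → Submodule ℂ (ℂ ⊗[ℚ] V)) (Sg : Set (K →+* ℂ)) (r s : ℕ) :
    Submodule ℂ ((ℂ ⊗[ℚ] V) ⊗[ℂ] (ℂ ⊗[ℚ] K)) :=
  ⨆ (p : ℕ) (q : ℕ) (p' : ℕ) (q' : ℕ) (_ : p + p' = r) (_ : q + q' = s),
    LinearMap.range (TensorProduct.mapIncl (Vpq p q) (KnegHalf K Sg p' q'))

/-- `V' := {w ∈ V ⊗_ℚ K : (x ⊗ 1)w = (1 ⊗ x)w for all x ∈ K}`. -/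
def Vprime (K : Type*) [Field K] [Algebra ℚ K]
    (V : Type*) [AddCommGroup V] [Module ℚ V] [Module K V] [IsScalarTower ℚ K V] :
    Submodule ℚ (V ⊗[ℚ] K) :=
  ⨅ x : K, LinearMap.ker
    (TensorProduct.map (smulQ K V x) LinearMap.id -
      TensorProduct.map LinearMap.id (smulQ K K x))

/-- The `(r,s)`-piece `(⊕_{σ∈Σ} V^{r-1,s}_σ ⊗ K_σ) ⊕ (⊕_{σ∈Σ̄} V^{r,s-1}_σ ⊗ K_σ)`
of the induced decomposition of `V'` (a summand being `0` when `r-1 < 0` resp.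
`s-1 < 0`). -/
def VprimePiece (K : Type*) [Field K] [Algebra ℚ K]
    (V : Type*) [AddCommGroup V] [Module ℚ V] [Module K V] [IsScalarTower ℚ K V]
    (Vpq : ℕ → ℕ → Submodule ℂ (ℂ ⊗[ℚ] V)) (Sg : Set (K →+* ℂ)) (r s : ℕ) :
    Submodule ℂ ((ℂ ⊗[ℚ] V) ⊗[ℂ] (ℂ ⊗[ℚ] K)) :=
  (if r = 0 then ⊥ else
    ⨆ σ ∈ Sg, LinearMap.range
      (TensorProduct.mapIncl (Vpq (r - 1) s ⊓ Vsig K V σ) (Vsig K K σ))) ⊔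
  (if s = 0 then ⊥ else
    ⨆ σ ∈ {σ : K →+* ℂ | (starRingEnd ℂ).comp σ ∈ Sg},
      LinearMap.range
        (TensorProduct.mapIncl (Vpq r (s - 1) ⊓ Vsig K V σ) (Vsig K K σ)))

/-! ### The algebra `K_ℂ` and its idempotents -/

section Idempotents

variable (K : Type*) [Field K] [NumberField K]

/-- The isomorphism `ℂ ⊗_ℚ K ≃ ∏_σ ℂ`, `c ⊗ x ↦ (c σ(x))_σ`, over all embeddings `σ : K → ℂ`. -/
def embEquiv : (ℂ ⊗[ℚ] K) ≃ₗ[ℂ] ((K →+* ℂ) → ℂ) :=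
  ((NumberField.integralBasis K).baseChange ℂ).equiv
    (NumberField.canonicalEmbedding.latticeBasis K) (Equiv.refl _)

theorem embEquiv_tmul (c : ℂ) (x : K) (σ : K →+* ℂ) :
    embEquiv K (c ⊗ₜ x) σ = c * σ x := by
  have h : (embEquiv K).toLinearMap.restrictScalars ℚ ∘ₗ (TensorProduct.mk ℚ ℂ K 1) =
      (NumberField.canonicalEmbedding K).toRatAlgHom.toLinearMap := by
    refine (NumberField.integralBasis K).ext fun i => ?_
    have := ((NumberField.integralBasis K).baseChange ℂ).equiv_apply i
      (NumberField.canonicalEmbedding.latticeBasis K) (Equiv.refl _)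
    rw [Basis.baseChange_apply] at this
    simpa [embEquiv, NumberField.canonicalEmbedding.latticeBasis_apply] using this
  have h1 : embEquiv K (1 ⊗ₜ x) = NumberField.canonicalEmbedding K x := LinearMap.congr_fun h x
  have h2 : (c ⊗ₜ[ℚ] x : ℂ ⊗[ℚ] K) = c • (1 ⊗ₜ x) := by simp [TensorProduct.smul_tmul']
  rw [h2, map_smul, h1]
  simp [NumberField.canonicalEmbedding.apply_at]

open Classical in
/-- The primitive idempotent `e_σ` of `K_ℂ`, a generator of the line `K_σ`. -/
def idem (σ : K →+* ℂ) : ℂ ⊗[ℚ] K := (embEquiv K).symm (Pi.single σ 1)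

open Classical in
theorem embEquiv_idem (σ τ : K →+* ℂ) : embEquiv K (idem K σ) τ = if τ = σ then 1 else 0 := by
  simp [idem, Pi.single_apply]

theorem sum_embEquiv_smul_idem (k : ℂ ⊗[ℚ] K) : ∑ σ, embEquiv K k σ • idem K σ = k := by
  classical
  apply (embEquiv K).injective
  ext τ
  simp [embEquiv_idem]

theorem sum_idem : ∑ σ, idem K σ = 1 ⊗ₜ (1 : K) := by
  simpa [embEquiv_tmul] using sum_embEquiv_smul_idem K (1 ⊗ₜ 1)

end Idempotents

/-! ### The action of `K_ℂ` on `V_ℂ` -/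

section Action

variable (K : Type*) [Field K] [NumberField K]
variable (V : Type*) [AddCommGroup V] [Module ℚ V] [Module K V] [IsScalarTower ℚ K V]

@[simp] theorem actK_tmul (x : K) (c : ℂ) (v : V) : actK K V x (c ⊗ₜ v) = c ⊗ₜ (x • v) := rfl

theorem actK_one : actK K V 1 = LinearMap.id := by
  ext v; simp

theorem actK_mul (x y : K) : actK K V (x * y) = actK K V x ∘ₗ actK K V y := by
  ext v; simp [mul_smul]

theorem actK_add (x y : K) : actK K V (x + y) = actK K V x + actK K V y := by
  ext v; simp [add_smul, TensorProduct.tmul_add]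

theorem actK_rat_smul (q : ℚ) (x : K) : actK K V (q • x) = q • actK K V x := by
  ext v; simp

theorem mem_Vsig {σ : K →+* ℂ} {v : ℂ ⊗[ℚ] V} :
    v ∈ Vsig K V σ ↔ ∀ x, actK K V x v = σ x • v := by
  simp [Vsig, Submodule.mem_iInf, sub_eq_zero]

/-- The action of the algebra `K_ℂ` on `V_ℂ`, i.e. `(c ⊗ x) v = c • x • v`. -/
def actC : (ℂ ⊗[ℚ] K) →ₗ[ℂ] Module.End ℂ (ℂ ⊗[ℚ] V) :=
  LinearMap.liftBaseChange ℂ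
    { toFun := actK K V
      map_add' := actK_add K V
      map_smul' := actK_rat_smul K V }

@[simp] theorem actC_tmul (c : ℂ) (x : K) : actC K V (c ⊗ₜ x) = c • actK K V x := by
  simp [actC]

theorem actK_actC (x : K) (k : ℂ ⊗[ℚ] K) (v : ℂ ⊗[ℚ] V) :
    actK K V x (actC K V k v) = actC K V (actK K K x k) v := by
  induction k with
  | zero => simp
  | add a b ha hb => simp [ha, hb]
  | tmul c y => simp [actK_mul]

theorem embEquiv_actK (x : K) (k : ℂ ⊗[ℚ] K) (σ : K →+* ℂ) :
    embEquiv K (actK K K x k) σ = σ x * embEquiv K k σ := by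
  induction k with
  | zero => simp
  | add a b ha hb => simp [ha, hb, mul_add]
  | tmul c y => simp [embEquiv_tmul]; ring

theorem actK_idem (x : K) (σ : K →+* ℂ) : actK K K x (idem K σ) = σ x • idem K σ := by
  classical
  apply (embEquiv K).injective
  ext τ
  rw [embEquiv_actK]
  by_cases h : τ = σ <;> simp [embEquiv_idem, h]

theorem idem_mem (σ : K →+* ℂ) : idem K σ ∈ Vsig K K σ :=
  (mem_Vsig K K).2 fun x => actK_idem K x σ

theorem actC_idem_mem (σ : K →+* ℂ) (v : ℂ ⊗[ℚ] V) : actC K V (idem K σ) v ∈ Vsig K V σ := by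
  refine (mem_Vsig K V).2 fun x => ?_
  rw [actK_actC, actK_idem]; simp

theorem actC_of_mem {σ : K →+* ℂ} {v : ℂ ⊗[ℚ] V} (hv : v ∈ Vsig K V σ) (k : ℂ ⊗[ℚ] K) :
    actC K V k v = embEquiv K k σ • v := by
  induction k with
  | zero => simp
  | add a b ha hb => simp [ha, hb, add_smul]
  | tmul c y => simp [embEquiv_tmul, (mem_Vsig K V).1 hv, smul_smul]

theorem actC_idem_self {σ : K →+* ℂ} {v : ℂ ⊗[ℚ] V} (hv : v ∈ Vsig K V σ) :
    actC K V (idem K σ) v = v := by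
  classical
  simp [actC_of_mem K V hv, embEquiv_idem]

theorem actC_idem_ne {σ τ : K →+* ℂ} (h : σ ≠ τ) {v : ℂ ⊗[ℚ] V} (hv : v ∈ Vsig K V σ) :
    actC K V (idem K τ) v = 0 := by
  classical
  simp [actC_of_mem K V hv, embEquiv_idem, h]

theorem sum_actC_idem : ∑ σ, actC K V (idem K σ) = LinearMap.id := by
  rw [← map_sum, sum_idem]; simp [actK_one]

theorem actC_mem {N : Submodule ℂ (ℂ ⊗[ℚ] V)} (hN : ∀ x, Submodule.map (actK K V x) N ≤ N)
    (k : ℂ ⊗[ℚ] K) {v : ℂ ⊗[ℚ] V} (hv : v ∈ N) : actC K V k v ∈ N := by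
  induction k with
  | zero => simp
  | add a b ha hb => simpa using N.add_mem ha hb
  | tmul c y => simpa using N.smul_mem c (hN y (Submodule.mem_map_of_mem hv))

theorem eq_smul_idem {σ : K →+* ℂ} {k : ℂ ⊗[ℚ] K} (hk : k ∈ Vsig K K σ) :
    k = embEquiv K k σ • idem K σ := by
  classical
  apply (embEquiv K).injective
  ext τ
  by_cases h : τ = σ
  · subst h; simp [embEquiv_idem]
  · obtain ⟨x, hx⟩ : ∃ x, τ x ≠ σ x := by
      by_contra! hc
      exact h (RingHom.ext hc)
    have := embEquiv_actK K x k τ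
    rw [(mem_Vsig K K).1 hk] at this
    simp only [map_smul, Pi.smul_apply, smul_eq_mul, embEquiv_idem, h, if_false, mul_zero] at this ⊢
    by_contra h0
    exact hx (mul_right_cancel₀ h0 this).symm

theorem iSup_Vsig : ⨆ σ, Vsig K V σ = ⊤ := by
  refine eq_top_iff.2 fun v _ => ?_
  rw [← LinearMap.id_apply (R := ℂ) v, ← sum_actC_idem K V, LinearMap.sum_apply]
  exact Submodule.sum_mem _ fun σ _ => Submodule.mem_iSup_of_mem σ (actC_idem_mem K V σ v)

/-- The sums of eigenspaces over disjoint sets of embeddings are disjoint. -/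
theorem disjoint_Vsig {S T : Set (K →+* ℂ)} (hST : Disjoint S T) :
    Disjoint (⨆ σ ∈ S, Vsig K V σ) (⨆ σ ∈ T, Vsig K V σ) := by
  classical
  have h1 : ∀ σ, σ ∉ S → (⨆ τ ∈ S, Vsig K V τ) ≤ LinearMap.ker (actC K V (idem K σ)) :=
    fun σ hσ => iSup₂_le fun τ hτ v hv =>
      actC_idem_ne K V (ne_of_mem_of_not_mem hτ hσ) hv
  have h2 : ∀ σ, σ ∉ T → (⨆ τ ∈ T, Vsig K V τ) ≤ LinearMap.ker (actC K V (idem K σ)) :=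
    fun σ hσ => iSup₂_le fun τ hτ v hv =>
      actC_idem_ne K V (ne_of_mem_of_not_mem hτ hσ) hv
  refine Submodule.disjoint_def.2 fun v hS hT => ?_
  rw [← LinearMap.id_apply (R := ℂ) v, ← sum_actC_idem K V, LinearMap.sum_apply]
  refine Finset.sum_eq_zero fun σ _ => ?_
  by_cases hσ : σ ∈ S
  · exact h2 σ (fun h => Set.disjoint_left.1 hST hσ h) hT
  · exact h1 σ hσ hS

end Action

/-! ### The complexification of `V'` -/

section Complexification

theorem distrib_map (M N : Type*) [AddCommGroup M] [Module ℚ M] [AddCommGroup N] [Module ℚ N]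
    (f : M →ₗ[ℚ] M) (g : N →ₗ[ℚ] N) (u : ℂ ⊗[ℚ] (M ⊗[ℚ] N)) :
    TensorProduct.AlgebraTensorModule.distribBaseChange ℚ ℂ M N
      ((TensorProduct.map f g).baseChange ℂ u) =
    TensorProduct.map (f.baseChange ℂ) (g.baseChange ℂ)
      (TensorProduct.AlgebraTensorModule.distribBaseChange ℚ ℂ M N u) := by
  induction u with
  | zero => simp
  | add a b ha hb => simp [ha, hb]
  | tmul c t =>
    induction t with
    | zero => simp
    | add a b ha hb => simp only [TensorProduct.tmul_add, map_add, ha, hb]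
    | tmul v k => simp [TensorProduct.AlgebraTensorModule.distribBaseChange_tmul]

variable (K : Type*) [Field K] [NumberField K]
variable (V : Type*) [AddCommGroup V] [Module ℚ V] [Module K V] [IsScalarTower ℚ K V]

theorem mem_Vprime {w : V ⊗[ℚ] K} :
    w ∈ Vprime K V ↔ ∀ x : K, TensorProduct.map (smulQ K V x) LinearMap.id w =
      TensorProduct.map LinearMap.id (smulQ K K x) w := by
  simp [Vprime, Submodule.mem_iInf, sub_eq_zero]

/-- For a primitive element `θ`, the single condition `(θ ⊗ 1)w = (1 ⊗ θ)w` cuts out `V'`, because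
the `x ∈ K` with `(x ⊗ 1)w = (1 ⊗ x)w` form a subalgebra. -/
theorem Vprime_eq_ker {θ : K} (hθ : Algebra.adjoin ℚ {θ} = ⊤) :
    Vprime K V = LinearMap.ker
      (TensorProduct.map (smulQ K V θ) LinearMap.id -
        TensorProduct.map LinearMap.id (smulQ K K θ)) := by
  refine le_antisymm (iInf_le _ θ) fun w hw => (mem_Vprime K V).2 fun x => ?_
  rw [LinearMap.mem_ker, LinearMap.sub_apply, sub_eq_zero] at hw
  have hx : x ∈ Algebra.adjoin ℚ {θ} := hθ ▸ Algebra.mem_top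
  induction hx using Algebra.adjoin_induction with
  | mem x hx => rw [Set.mem_singleton_iff.1 hx]; exact hw
  | algebraMap q =>
    have h1 : smulQ K V (algebraMap ℚ K q) = q • LinearMap.id := by
      ext v; exact algebraMap_smul K q v
    have h2 : smulQ K K (algebraMap ℚ K q) = q • LinearMap.id := by
      ext; simp [smulQ, Algebra.smul_def]
    rw [h1, h2, TensorProduct.map_smul_left, TensorProduct.map_smul_right]
  | add x y _ _ hx hy =>
    have h1 : smulQ K V (x + y) = smulQ K V x + smulQ K V y := by
      ext v; simp [smulQ, add_smul]
    have h2 : smulQ K K (x + y) = smulQ K K x + smulQ K K y := by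
      ext; simp [smulQ, add_mul]
    rw [h1, h2, TensorProduct.map_add_left, TensorProduct.map_add_right, LinearMap.add_apply,
      LinearMap.add_apply, hx, hy]
  | mul x y _ _ hx hy =>
    have h1 : TensorProduct.map (smulQ K V (x * y)) (LinearMap.id : K →ₗ[ℚ] K) =
        TensorProduct.map (smulQ K V x) LinearMap.id ∘ₗ
          TensorProduct.map (smulQ K V y) LinearMap.id := by
      ext v; simp [smulQ, mul_smul]
    have h2 : TensorProduct.map (LinearMap.id : V →ₗ[ℚ] V) (smulQ K K (x * y)) =
        TensorProduct.map LinearMap.id (smulQ K K y) ∘ₗ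
          TensorProduct.map LinearMap.id (smulQ K K x) := by
      ext v
      simp [smulQ]
      ring_nf
    have h3 : TensorProduct.map (smulQ K V x) LinearMap.id ∘ₗ
          TensorProduct.map LinearMap.id (smulQ K K y) =
        TensorProduct.map LinearMap.id (smulQ K K y) ∘ₗ
          TensorProduct.map (smulQ K V x) (LinearMap.id : K →ₗ[ℚ] K) := by
      rw [← TensorProduct.map_comp, ← TensorProduct.map_comp]; rfl
    rw [h1, h2, LinearMap.comp_apply, hy, ← LinearMap.comp_apply, h3, LinearMap.comp_apply, hx,
      LinearMap.comp_apply]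

/-- The image of `ℂ ⊗ V'` in `V_ℂ ⊗_ℂ K_ℂ`. -/
def VprimeC : Submodule ℂ ((ℂ ⊗[ℚ] V) ⊗[ℂ] (ℂ ⊗[ℚ] K)) :=
  Submodule.map
    (TensorProduct.AlgebraTensorModule.distribBaseChange ℚ ℂ V K :
      (ℂ ⊗[ℚ] (V ⊗[ℚ] K)) →ₗ[ℂ] (ℂ ⊗[ℚ] V) ⊗[ℂ] (ℂ ⊗[ℚ] K))
    ((Vprime K V).baseChange ℂ)

/-- By flatness of `ℂ` over `ℚ`, the complexification of `V'` is cut out of `V_ℂ ⊗_ℂ K_ℂ` by the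
same equations as `V'`. -/
theorem mem_VprimeC {w : (ℂ ⊗[ℚ] V) ⊗[ℂ] (ℂ ⊗[ℚ] K)} :
    w ∈ VprimeC K V ↔ ∀ x : K, TensorProduct.map (actK K V x) LinearMap.id w =
      TensorProduct.map LinearMap.id (actK K K x) w := by
  constructor
  · rintro ⟨u, hu, rfl⟩ x
    have key : ∀ u ∈ (Vprime K V).baseChange ℂ,
        (TensorProduct.map (smulQ K V x) LinearMap.id).baseChange ℂ u =
          (TensorProduct.map (LinearMap.id : V →ₗ[ℚ] V) (smulQ K K x)).baseChange ℂ u := by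
      intro u hu
      rw [Submodule.baseChange_eq_span] at hu
      induction hu using Submodule.span_induction with
      | zero => simp
      | add a b _ _ ha hb => simp [ha, hb]
      | smul c a _ ha => simp [ha]
      | mem a ha =>
        obtain ⟨t, ht, rfl⟩ := ha
        simp [(mem_Vprime K V).1 ht x]
    have := congrArg (TensorProduct.AlgebraTensorModule.distribBaseChange ℚ ℂ V K) (key u hu)
    rw [distrib_map, distrib_map, LinearMap.baseChange_id, LinearMap.baseChange_id] at this
    exact this
  · intro hw
    obtain ⟨θ, hθ⟩ := Field.exists_primitive_element ℚ K
    rw [IntermediateField.adjoin_simple_eq_top_iff_of_isAlgebraic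
      (Algebra.IsAlgebraic.isAlgebraic θ)] at hθ
    obtain ⟨u, rfl⟩ :=
      (TensorProduct.AlgebraTensorModule.distribBaseChange ℚ ℂ V K).surjective w
    refine Submodule.mem_map_of_mem ?_
    have h := hw θ
    have e1 := distrib_map V K (smulQ K V θ) LinearMap.id u
    have e2 := distrib_map V K LinearMap.id (smulQ K K θ) u
    rw [LinearMap.baseChange_id] at e1 e2
    have h' := (TensorProduct.AlgebraTensorModule.distribBaseChange ℚ ℂ V K).injective
      (e1.trans (h.trans e2.symm))
    rw [Vprime_eq_ker K V hθ]
    have hk := Module.Flat.ker_lTensor_eq (R := ℚ) ℂ ℂ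
      (TensorProduct.map (smulQ K V θ) LinearMap.id -
        TensorProduct.map LinearMap.id (smulQ K K θ))
    have hu : u ∈ LinearMap.ker ((TensorProduct.map (smulQ K V θ) LinearMap.id -
        TensorProduct.map LinearMap.id (smulQ K K θ)).baseChange ℂ) := by
      rw [LinearMap.baseChange_sub, LinearMap.mem_ker, LinearMap.sub_apply, sub_eq_zero, h']
    have hu' := hk.le hu
    exact hu'

theorem map_actC_of_mem {w : (ℂ ⊗[ℚ] V) ⊗[ℂ] (ℂ ⊗[ℚ] K)} (hw : w ∈ VprimeC K V)
    (k : ℂ ⊗[ℚ] K) : TensorProduct.map (actC K V k) LinearMap.id w =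
      TensorProduct.map LinearMap.id (actC K K k) w := by
  induction k with
  | zero => simp
  | add a b ha hb =>
    simp only [map_add, TensorProduct.map_add_left, TensorProduct.map_add_right,
      LinearMap.add_apply, ha, hb]
  | tmul c x =>
    simp only [actC_tmul, TensorProduct.map_smul_left, TensorProduct.map_smul_right,
      LinearMap.smul_apply, (mem_VprimeC K V).1 hw x]

/-- The projector `∑_σ e_σ ⊗ e_σ` of `V_ℂ ⊗ K_ℂ` onto the complexification of `V'`. -/
def projE : (ℂ ⊗[ℚ] V) ⊗[ℂ] (ℂ ⊗[ℚ] K) →ₗ[ℂ] (ℂ ⊗[ℚ] V) ⊗[ℂ] (ℂ ⊗[ℚ] K) :=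
  ∑ σ, TensorProduct.map (actC K V (idem K σ)) (actC K K (idem K σ))

theorem projE_of_mem {w : (ℂ ⊗[ℚ] V) ⊗[ℂ] (ℂ ⊗[ℚ] K)} (hw : w ∈ VprimeC K V) :
    projE K V w = w := by
  have h1 : ∀ σ, TensorProduct.map (actC K V (idem K σ)) (actC K K (idem K σ)) w =
      TensorProduct.map (actC K V (idem K σ)) LinearMap.id w := by
    intro σ
    have hid : actC K V (idem K σ) ∘ₗ actC K V (idem K σ) = actC K V (idem K σ) :=
      LinearMap.ext fun v => actC_idem_self K V (actC_idem_mem K V σ v)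
    calc _ = TensorProduct.map (actC K V (idem K σ)) LinearMap.id
          (TensorProduct.map LinearMap.id (actC K K (idem K σ)) w) := by
          rw [← LinearMap.comp_apply, ← TensorProduct.map_comp]; rfl
      _ = _ := by
          rw [← map_actC_of_mem K V hw, ← LinearMap.comp_apply, ← TensorProduct.map_comp, hid]
          rfl
  have h2 : ∑ σ, TensorProduct.map (actC K V (idem K σ))
      (LinearMap.id : (ℂ ⊗[ℚ] K) →ₗ[ℂ] _) = LinearMap.id := by
    have := congrArg (fun f => TensorProduct.map f (LinearMap.id : (ℂ ⊗[ℚ] K) →ₗ[ℂ] _))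
      (sum_actC_idem K V)
    simp only [TensorProduct.map_id] at this
    rw [← this]
    exact (map_sum (((TensorProduct.mapBilinear (.id ℂ) _ _ _ _).flip
      (LinearMap.id : (ℂ ⊗[ℚ] K) →ₗ[ℂ] _))) _ _).symm
  rw [projE, LinearMap.sum_apply, Finset.sum_congr rfl fun σ _ => h1 σ, ← LinearMap.sum_apply, h2]
  rfl

theorem projE_tmul {σ : K →+* ℂ} (v : ℂ ⊗[ℚ] V) {k : ℂ ⊗[ℚ] K} (hk : k ∈ Vsig K K σ) :
    projE K V (v ⊗ₜ k) = actC K V (idem K σ) v ⊗ₜ k := by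
  rw [projE, LinearMap.sum_apply, Finset.sum_eq_single_of_mem σ (Finset.mem_univ _)]
  · rw [TensorProduct.map_tmul, actC_idem_self K K hk]
  · intro τ _ h
    rw [TensorProduct.map_tmul, actC_idem_ne K K h.symm hk, TensorProduct.tmul_zero]

theorem tmul_mem_VprimeC {σ : K →+* ℂ} {v : ℂ ⊗[ℚ] V} {k : ℂ ⊗[ℚ] K} (hv : v ∈ Vsig K V σ)
    (hk : k ∈ Vsig K K σ) : v ⊗ₜ k ∈ VprimeC K V := by
  refine (mem_VprimeC K V).2 fun x => ?_
  simp [(mem_Vsig K V).1 hv, (mem_Vsig K K).1 hk, TensorProduct.smul_tmul]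

/-- The isomorphism `v ↦ ∑_σ e_σ v ⊗ e_σ` of `V_ℂ` onto the complexification of `V'`. -/
def embF : (ℂ ⊗[ℚ] V) →ₗ[ℂ] (ℂ ⊗[ℚ] V) ⊗[ℂ] (ℂ ⊗[ℚ] K) :=
  projE K V ∘ₗ (TensorProduct.mk ℂ (ℂ ⊗[ℚ] V) (ℂ ⊗[ℚ] K)).flip (1 ⊗ₜ 1)

theorem embF_apply (v : ℂ ⊗[ℚ] V) :
    embF K V v = ∑ σ, actC K V (idem K σ) v ⊗ₜ idem K σ := by
  rw [embF, LinearMap.comp_apply, LinearMap.flip_apply, TensorProduct.mk_apply, ← sum_idem,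
    TensorProduct.tmul_sum, map_sum]
  exact Finset.sum_congr rfl fun σ _ => projE_tmul K V v (idem_mem K σ)

theorem embF_of_mem {σ : K →+* ℂ} {v : ℂ ⊗[ℚ] V} (hv : v ∈ Vsig K V σ) :
    embF K V v = v ⊗ₜ idem K σ := by
  rw [embF_apply, Finset.sum_eq_single_of_mem σ (Finset.mem_univ _), actC_idem_self K V hv]
  intro τ _ h
  rw [actC_idem_ne K V h.symm hv, TensorProduct.zero_tmul]

/-- A left inverse of `embF` is the multiplication `v ⊗ k ↦ k v`. -/
theorem embF_injective : Function.Injective (embF K V) := by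
  have h : TensorProduct.lift (actC K V).flip ∘ₗ embF K V = LinearMap.id := by
    rw [← sum_actC_idem K V]
    ext v
    simp only [TensorProduct.AlgebraTensorModule.curry_apply,
      TensorProduct.curry_apply, LinearMap.comp_apply, embF_apply, map_sum, TensorProduct.lift.tmul,
      LinearMap.flip_apply, LinearMap.sum_apply, LinearMap.coe_restrictScalars]
    exact Finset.sum_congr rfl fun σ _ => actC_idem_self K V (actC_idem_mem K V σ _)
  exact Function.LeftInverse.injective (g := TensorProduct.lift (actC K V).flip)
    (LinearMap.congr_fun h)

theorem map_embF {σ : K →+* ℂ} {N : Submodule ℂ (ℂ ⊗[ℚ] V)} :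
    Submodule.map (embF K V) (N ⊓ Vsig K V σ) =
      LinearMap.range (TensorProduct.mapIncl (N ⊓ Vsig K V σ) (Vsig K K σ)) := by
  rw [TensorProduct.range_mapIncl]
  refine le_antisymm ?_ (Submodule.map₂_le.2 fun v hv k hk => ?_)
  · rintro _ ⟨v, hv, rfl⟩
    rw [embF_of_mem K V hv.2]
    exact Submodule.apply_mem_map₂ _ hv (idem_mem K σ)
  · refine ⟨embEquiv K k σ • v, Submodule.smul_mem _ _ hv, ?_⟩
    rw [map_smul, embF_of_mem K V hv.2, TensorProduct.mk_apply]
    conv_rhs => rw [eq_smul_idem K hk]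
    rw [TensorProduct.tmul_smul]

end Complexification

/-! ### The Hodge pieces -/

section Pieces

variable (K : Type*) [Field K] [NumberField K]
variable (V : Type*) [AddCommGroup V] [Module ℚ V] [Module K V] [IsScalarTower ℚ K V]
variable (Vpq : ℕ → ℕ → Submodule ℂ (ℂ ⊗[ℚ] V)) (Sg : Set (K →+* ℂ))

theorem range_le_tensorPiece {p q p' q' r s : ℕ} (hr : p + p' = r) (hs : q + q' = s) :
    LinearMap.range (TensorProduct.mapIncl (Vpq p q) (KnegHalf K Sg p' q')) ≤
      tensorPiece K V Vpq Sg r s :=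
  le_iSup_of_le p <| le_iSup_of_le q <| le_iSup_of_le p' <| le_iSup_of_le q' <|
    le_iSup_of_le hr <| le_iSup_of_le hs le_rfl

theorem KnegHalf_one_zero : KnegHalf K Sg 1 0 = ⨆ σ ∈ Sg, Vsig K K σ := by
  simp [KnegHalf]

theorem KnegHalf_zero_one : KnegHalf K Sg 0 1 =
    ⨆ σ ∈ {σ : K →+* ℂ | (starRingEnd ℂ).comp σ ∈ Sg}, Vsig K K σ := by
  simp [KnegHalf]

variable {Vpq Sg} in
theorem tmul_mem_VprimePiece_left {p q : ℕ} {σ : K →+* ℂ} (hσ : σ ∈ Sg) {v : ℂ ⊗[ℚ] V}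
    (hv : v ∈ Vpq p q ⊓ Vsig K V σ) {k : ℂ ⊗[ℚ] K} (hk : k ∈ Vsig K K σ) :
    v ⊗ₜ k ∈ VprimePiece K V Vpq Sg (p + 1) q := by
  refine Submodule.mem_sup_left ?_
  rw [if_neg (Nat.succ_ne_zero p)]
  refine Submodule.mem_iSup_of_mem σ (Submodule.mem_iSup_of_mem hσ ?_)
  rw [TensorProduct.range_mapIncl]
  exact Submodule.apply_mem_map₂ (TensorProduct.mk ℂ _ _) hv hk

variable {Vpq Sg} in
theorem tmul_mem_VprimePiece_right {p q : ℕ} {σ : K →+* ℂ}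
    (hσ : (starRingEnd ℂ).comp σ ∈ Sg) {v : ℂ ⊗[ℚ] V}
    (hv : v ∈ Vpq p q ⊓ Vsig K V σ) {k : ℂ ⊗[ℚ] K} (hk : k ∈ Vsig K K σ) :
    v ⊗ₜ k ∈ VprimePiece K V Vpq Sg p (q + 1) := by
  refine Submodule.mem_sup_right ?_
  rw [if_neg (Nat.succ_ne_zero q)]
  refine Submodule.mem_iSup_of_mem σ (Submodule.mem_iSup_of_mem hσ ?_)
  rw [TensorProduct.range_mapIncl]
  exact Submodule.apply_mem_map₂ (TensorProduct.mk ℂ _ _) hv hk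

theorem VprimePiece_le (r s : ℕ) :
    VprimePiece K V Vpq Sg r s ≤ VprimeC K V ⊓ tensorPiece K V Vpq Sg r s := by
  refine sup_le ?_ ?_
  · split_ifs with h
    · exact bot_le
    refine iSup₂_le fun σ hσ => ?_
    rw [TensorProduct.range_mapIncl]
    refine Submodule.map₂_le.2 fun v hv k hk => ⟨tmul_mem_VprimeC K V hv.2 hk, ?_⟩
    refine range_le_tensorPiece K V Vpq Sg (p := r - 1) (p' := 1) (q' := 0) (by omega) rfl ?_
    rw [TensorProduct.range_mapIncl, KnegHalf_one_zero]
    exact Submodule.apply_mem_map₂ (TensorProduct.mk ℂ _ _) hv.1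
      (Submodule.mem_iSup_of_mem σ (Submodule.mem_iSup_of_mem hσ hk))
  · split_ifs with h
    · exact bot_le
    refine iSup₂_le fun σ hσ => ?_
    rw [TensorProduct.range_mapIncl]
    refine Submodule.map₂_le.2 fun v hv k hk => ⟨tmul_mem_VprimeC K V hv.2 hk, ?_⟩
    refine range_le_tensorPiece K V Vpq Sg (q := s - 1) (p' := 0) (q' := 1) rfl (by omega) ?_
    rw [TensorProduct.range_mapIncl, KnegHalf_zero_one]
    exact Submodule.apply_mem_map₂ (TensorProduct.mk ℂ _ _) hv.1
      (Submodule.mem_iSup_of_mem σ (Submodule.mem_iSup_of_mem hσ hk))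

/-- The projector onto `V'_ℂ` carries each Hodge summand of `V ⊗ K_{-1/2}` into the corresponding
piece of `V'`. -/
theorem map_projE_le (hKst : ∀ (x : K) (p q : ℕ), Submodule.map (actK K V x) (Vpq p q) ≤ Vpq p q)
    (r s : ℕ) :
    Submodule.map (projE K V) (tensorPiece K V Vpq Sg r s) ≤ VprimePiece K V Vpq Sg r s := by
  have hP : ∀ p q σ, ∀ v ∈ Vpq p q, actC K V (idem K σ) v ∈ Vpq p q ⊓ Vsig K V σ :=
    fun p q σ v hv => ⟨actC_mem K V (fun x => hKst x p q) _ hv, actC_idem_mem K V σ v⟩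
  rw [Submodule.map_le_iff_le_comap]
  refine iSup_le fun p => iSup_le fun q => iSup_le fun p' => iSup_le fun q' =>
    iSup_le fun hr => iSup_le fun hs => ?_
  rw [TensorProduct.range_mapIncl]
  refine Submodule.map₂_le.2 fun v hv => ?_
  -- For fixed `v` the condition on `k` is linear, so `k` may be taken in a single line `K_σ`.
  suffices h : KnegHalf K Sg p' q' ≤ Submodule.comap (TensorProduct.mk ℂ _ _ v)
      (Submodule.comap (projE K V) (VprimePiece K V Vpq Sg r s)) from fun k hk => h hk
  unfold KnegHalf
  split_ifs with h1 h2
  · obtain ⟨rfl, rfl⟩ := h1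
    subst hr hs
    refine iSup₂_le fun σ hσ k hk => ?_
    rw [Submodule.mem_comap, Submodule.mem_comap, TensorProduct.mk_apply, projE_tmul K V v hk]
    exact tmul_mem_VprimePiece_left K V hσ (hP p q σ v hv) hk
  · obtain ⟨rfl, rfl⟩ := h2
    subst hr hs
    refine iSup₂_le fun σ hσ k hk => ?_
    rw [Submodule.mem_comap, Submodule.mem_comap, TensorProduct.mk_apply, projE_tmul K V v hk]
    exact tmul_mem_VprimePiece_right K V hσ (hP p q σ v hv) hk
  · exact bot_le

theorem inf_tensorPiece
    (hKst : ∀ (x : K) (p q : ℕ), Submodule.map (actK K V x) (Vpq p q) ≤ Vpq p q) (r s : ℕ) :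
    VprimeC K V ⊓ tensorPiece K V Vpq Sg r s = VprimePiece K V Vpq Sg r s := by
  refine le_antisymm (fun w hw => ?_) (VprimePiece_le K V Vpq Sg r s)
  rw [← projE_of_mem K V hw.1]
  exact map_projE_le K V Vpq Sg hKst r s (Submodule.mem_map_of_mem hw.2)

theorem iSup_tensorPiece (htop : ⨆ pq : ℕ × ℕ, Vpq pq.1 pq.2 = ⊤)
    (hSg : ∀ σ : K →+* ℂ, σ ∈ Sg ∨ (starRingEnd ℂ).comp σ ∈ Sg) :
    ⨆ rs : ℕ × ℕ, tensorPiece K V Vpq Sg rs.1 rs.2 = ⊤ := by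
  have h : Submodule.map₂ (TensorProduct.mk ℂ (ℂ ⊗[ℚ] V) (ℂ ⊗[ℚ] K)) ⊤ ⊤ = ⊤ :=
    TensorProduct.map₂_mk_top_top_eq_top ..
  rw [eq_top_iff, ← h, ← htop, ← iSup_Vsig K K, Submodule.map₂_iSup_left]
  refine iSup_le fun pq => ?_
  rw [Submodule.map₂_iSup_right]
  refine iSup_le fun σ => ?_
  rcases hSg σ with hσ | hσ
  · refine le_iSup_of_le (pq.1 + 1, pq.2) (le_trans ?_
      (range_le_tensorPiece K V Vpq Sg (p' := 1) (q' := 0) rfl rfl))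
    rw [TensorProduct.range_mapIncl, KnegHalf_one_zero]
    exact Submodule.map₂_le_map₂_right (le_iSup₂_of_le σ hσ le_rfl)
  · refine le_iSup_of_le (pq.1, pq.2 + 1) (le_trans ?_
      (range_le_tensorPiece K V Vpq Sg (p' := 0) (q' := 1) rfl rfl))
    rw [TensorProduct.range_mapIncl, KnegHalf_zero_one]
    exact Submodule.map₂_le_map₂_right (le_iSup₂_of_le σ hσ le_rfl)

theorem VprimePiece_eq_map (r s : ℕ) : VprimePiece K V Vpq Sg r s =
    Submodule.map (embF K V)
      ((if r = 0 then ⊥ else VpqT K V Vpq Sg (r - 1) s) ⊔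
       (if s = 0 then ⊥ else
          VpqT K V Vpq {σ : K →+* ℂ | (starRingEnd ℂ).comp σ ∈ Sg} r (s - 1))) := by
  rw [Submodule.map_sup, VprimePiece]
  congr 1 <;> split_ifs <;> simp only [Submodule.map_bot, VpqT, Submodule.map_iSup, map_embF]

theorem VpqT_le (T : Set (K →+* ℂ)) (p q : ℕ) : VpqT K V Vpq T p q ≤ ⨆ σ ∈ T, Vsig K V σ :=
  iSup₂_mono fun _ _ => inf_le_right

end Pieces

/-- `V'` is a sub-Hodge structure of `V ⊗_ℚ K_{-1/2}` (of weight
`k+1`), its induced Hodge decomposition is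
`(V')^{r,s} = (⊕_{σ∈Σ} V^{r-1,s}_σ ⊗ K_σ) ⊕ (⊕_{σ∈Σ̄} V^{r,s-1}_σ ⊗ K_σ)`,
and in particular `dim_ℂ (V')^{r,s} = dim_ℂ V^{r-1,s}_Σ + dim_ℂ V^{r,s-1}_{Σ̄}`,
so `V'` is isomorphic to the negative half twist `V_{-1/2}`. -/
theorem Vprime_is_subHodge_of_V_tensor_KnegHalf
    -- `K` is a CM field:
    (K : Type*) [Field K] [NumberField K]
    (conj : K ≃ₐ[ℚ] K) (hconj : ∀ (σ : K →+* ℂ) (x : K), σ (conj x) = starRingEnd ℂ (σ x))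
    (hconj_ne : conj ≠ AlgEquiv.refl)
    -- `Σ` is a CM-type of `K`:
    (Sg : Set (K →+* ℂ))
    (hSg : ∀ σ : K →+* ℂ, Xor' (σ ∈ Sg) ((starRingEnd ℂ).comp σ ∈ Sg))
    -- `V` is a rational Hodge structure of weight `k`, of CM-type with field `K`:
    (V : Type*) [AddCommGroup V] [Module ℚ V] [Module K V] [IsScalarTower ℚ K V]
    [FiniteDimensional K V]
    (k : ℕ) (Vpq : ℕ → ℕ → Submodule ℂ (ℂ ⊗[ℚ] V))
    (hbot : ∀ p q, p + q ≠ k → Vpq p q = ⊥)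
    (hint : DirectSum.IsInternal (fun pq : ℕ × ℕ => Vpq pq.1 pq.2))
    (hcon : ∀ p q, Submodule.map (cmap V) ((Vpq p q).restrictScalars ℚ) =
      (Vpq q p).restrictScalars ℚ)
    (hKst : ∀ (x : K) (p q : ℕ), Submodule.map (actK K V x) (Vpq p q) ≤ Vpq p q) :
    -- the image of the complexification of `V'` in `V_ℂ ⊗_ℂ (K ⊗_ℚ ℂ)`:
    let U : Submodule ℂ ((ℂ ⊗[ℚ] V) ⊗[ℂ] (ℂ ⊗[ℚ] K)) :=
      Submodule.map
        (TensorProduct.AlgebraTensorModule.distribBaseChange ℚ ℂ V K :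
          (ℂ ⊗[ℚ] (V ⊗[ℚ] K)) →ₗ[ℂ] (ℂ ⊗[ℚ] V) ⊗[ℂ] (ℂ ⊗[ℚ] K))
        ((Vprime K V).baseChange ℂ)
    -- `V'` is a sub-Hodge structure: its complexification is the direct sum of
    -- its intersections with the Hodge summands of `V ⊗ K_{-1/2}`:
    (U = ⨆ rs : ℕ × ℕ, (U ⊓ tensorPiece K V Vpq Sg rs.1 rs.2)) ∧
    -- the induced Hodge decomposition of `V'`:
    (∀ r s : ℕ, U ⊓ tensorPiece K V Vpq Sg r s = VprimePiece K V Vpq Sg r s) ∧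
    -- in particular the Hodge numbers are those of the negative half twist `V_{-1/2}`:
    (∀ r s : ℕ,
      finrank ℂ ↥(U ⊓ tensorPiece K V Vpq Sg r s) =
        finrank ℂ ↥(if r = 0 then (⊥ : Submodule ℂ (ℂ ⊗[ℚ] V))
          else VpqT K V Vpq Sg (r - 1) s) +
        finrank ℂ ↥(if s = 0 then (⊥ : Submodule ℂ (ℂ ⊗[ℚ] V))
          else VpqT K V Vpq {σ : K →+* ℂ | (starRingEnd ℂ).comp σ ∈ Sg} r (s - 1))) := by
  intro U
  have hU : U = VprimeC K V := rfl
  have hpiece := inf_tensorPiece K V Vpq Sg hKst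
  refine ⟨?_, ?_, ?_⟩
  · refine le_antisymm (fun w hw => ?_) (iSup_le fun _ => inf_le_left)
    rw [hU] at hw
    have hw' : w ∈ ⨆ rs : ℕ × ℕ, tensorPiece K V Vpq Sg rs.1 rs.2 := by
      rw [iSup_tensorPiece K V Vpq Sg hint.submodule_iSup_eq_top fun σ =>
        (hSg σ).imp And.left And.left]
      exact Submodule.mem_top
    have hE := Submodule.mem_map_of_mem (f := projE K V) hw'
    rw [projE_of_mem K V hw, Submodule.map_iSup] at hE
    have hle : ∀ rs : ℕ × ℕ, Submodule.map (projE K V) (tensorPiece K V Vpq Sg rs.1 rs.2) ≤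
        U ⊓ tensorPiece K V Vpq Sg rs.1 rs.2 := fun rs =>
      (map_projE_le K V Vpq Sg hKst _ _).trans (hpiece _ _).ge
    exact iSup_mono hle hE
  · exact hpiece
  · intro r s
    have : FiniteDimensional ℚ V := Module.Finite.trans K V
    rw [hU, hpiece, VprimePiece_eq_map,
      ← (Submodule.equivMapOfInjective (embF K V) (embF_injective K V) _).finrank_eq]
    have hdisj : Disjoint
        (if r = 0 then (⊥ : Submodule ℂ (ℂ ⊗[ℚ] V)) else VpqT K V Vpq Sg (r - 1) s)
        (if s = 0 then (⊥ : Submodule ℂ (ℂ ⊗[ℚ] V))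
          else VpqT K V Vpq {σ : K →+* ℂ | (starRingEnd ℂ).comp σ ∈ Sg} r (s - 1)) := by
      have hS : Disjoint Sg {σ : K →+* ℂ | (starRingEnd ℂ).comp σ ∈ Sg} :=
        Set.disjoint_left.2 fun σ h1 h2 => (hSg σ).elim (fun h => h.2 h2) (fun h => h.2 h1)
      refine (disjoint_Vsig K V hS).mono ?_ ?_
      · split_ifs
        exacts [bot_le, VpqT_le K V Vpq _ _ _]
      · split_ifs
        exacts [bot_le, VpqT_le K V Vpq _ _ _]
    rw [← Submodule.finrank_sup_add_finrank_inf_eq, hdisj.eq_bot, finrank_bot, add_zero]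
end
end

section
/- Let k be a field of characteristic zero, m ≥ 1, and Q the quadratic form on k^{2m} given by Q(y) = Σ_{i=1}^m y_i·y_{m+i}. In the Clifford algebra C(Q) set f := ι(b_{m+1})⋯ι(b_{2m}) and h := ι(b₁)⋯ι(b_m). Then for all a, b ∈ C(Q): (a·f + b·h)·(f·h + h·f) = (-1)^{m(m-1)/2}·(a·f + b·h). -/
/-!
The vectors `b_{m+i}` and `b_i` give two families `x i`, `y i` of pairwise anticommuting square-zero
elements, with `x i` and `y j` anticommuting for `i ≠ j` and `x i * y i + y i * x i = 1`.

For `f = ∏ x i` and `h = ∏ y i` one has `f * f = 0` and `h * h = 0`, since moving the leading factor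
of the second copy to the front produces a square (`prod_mul_self_eq_zero`). By induction on the
number `n` of factors, `f * h * f = (-1) ^ (n * (n - 1) / 2) • f`
(`prod_mul_prod_mul_prod_of_pairing`): with `f = x * f'` and `h = y * h'`, moving `y` across
`f'` costs `(-1) ^ (n - 1)`, moving the second `x` across `f' * h'` costs nothing, and `x * y * x = x`.
The relations are symmetric in `x` and `y`, so the same holds with `f` and `h` exchanged; expanding
the product then gives the theorem.
-/

noncomputable section

/-- The hyperbolic quadratic form `Q(y) = Σ_{i=1}^m y_i·y_{m+i}` on `k^{2m}`,
where the coordinates are indexed by `Fin m ⊕ Fin m` (the first `m`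
coordinates by `Sum.inl`, the last `m` by `Sum.inr`). -/
def hypQ (k : Type*) [Field k] (m : ℕ) : QuadraticForm k ((Fin m ⊕ Fin m) → k) :=
  (∑ i : Fin m,
    (LinearMap.mul k k).compl₁₂ (LinearMap.proj (Sum.inl i)) (LinearMap.proj (Sum.inr i))
      : LinearMap.BilinMap k ((Fin m ⊕ Fin m) → k) k).toQuadraticMap

/-- `f := ι(b_{m+1})·ι(b_{m+2})⋯ι(b_{2m})` in the Clifford algebra of `hypQ`. -/
def cliffF (k : Type*) [Field k] (m : ℕ) : CliffordAlgebra (hypQ k m) :=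
  ((List.finRange m).map fun i =>
    CliffordAlgebra.ι (hypQ k m) (Pi.single (Sum.inr i) (1 : k))).prod

/-- `h := ι(b₁)·ι(b₂)⋯ι(b_m)` in the Clifford algebra of `hypQ`. -/
def cliffH (k : Type*) [Field k] (m : ℕ) : CliffordAlgebra (hypQ k m) :=
  ((List.finRange m).map fun i =>
    CliffordAlgebra.ι (hypQ k m) (Pi.single (Sum.inl i) (1 : k))).prod

section Abstract

variable {k A I : Type*} [CommRing k] [Ring A] [Algebra k A]

theorem prod_map_mul_of_anticomm (x : I → A) (z : A) (L : List I)
    (h : ∀ i ∈ L, x i * z = -(z * x i)) :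
    (L.map x).prod * z = (-1 : k) ^ L.length • (z * (L.map x).prod) := by
  induction L with
  | nil => simp
  | cons i L ih =>
    have h1 := h i (by simp)
    have h2 := ih fun j hj => h j (by simp [hj])
    rw [List.map_cons, List.prod_cons, mul_assoc, h2, mul_smul_comm, ← mul_assoc, h1,
      List.length_cons, pow_succ, neg_mul, smul_neg, mul_neg_one, neg_smul, mul_assoc]

theorem prod_mul_self_eq_zero (x : I → A) (hx : ∀ i, x i * x i = 0)
    (hxx : ∀ i j, i ≠ j → x i * x j = -(x j * x i)) (L : List I) (hne : L ≠ []) (hL : L.Nodup) :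
    (L.map x).prod * (L.map x).prod = 0 := by
  cases L with
  | nil => exact absurd rfl hne
  | cons i L =>
    have hi := (List.nodup_cons.mp hL).1
    have h1 := prod_map_mul_of_anticomm (k := ℤ) x (x i) L
      fun j hj => hxx j i (by rintro rfl; exact hi hj)
    rw [List.map_cons, List.prod_cons]
    generalize (L.map x).prod = X at *
    calc x i * X * (x i * X) = x i * (X * x i) * X := by noncomm_ring
      _ = 0 := by rw [h1, mul_smul_comm, ← mul_assoc, hx, zero_mul, smul_zero, zero_mul]

/-- If `x i` and `y i` are dual for the anticommutator, `f = ∏ x i` and `h = ∏ y i`, then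
`f * h * f` is `f` times the sign of the order-reversing permutation. -/
theorem prod_mul_prod_mul_prod_of_pairing (x y : I → A) (hx : ∀ i, x i * x i = 0)
    (hxx : ∀ i j, i ≠ j → x i * x j = -(x j * x i))
    (hxy : ∀ i j, i ≠ j → x i * y j = -(y j * x i))
    (hpair : ∀ i, x i * y i + y i * x i = 1) (L : List I) (hL : L.Nodup) :
    (L.map x).prod * (L.map y).prod * (L.map x).prod =
      (-1 : k) ^ (L.length * (L.length - 1) / 2) • (L.map x).prod := by
  induction L with
  | nil => simp
  | cons i L ih =>
    obtain ⟨hi, hL'⟩ := List.nodup_cons.mp hL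
    have ih := ih hL'
    have hne : ∀ j ∈ L, j ≠ i := by rintro j hj rfl; exact hi hj
    have h1 := prod_map_mul_of_anticomm (k := k) x (x i) L fun j hj => hxx j i (hne j hj)
    have h2 := prod_map_mul_of_anticomm (k := k) x (y i) L fun j hj => hxy j i (hne j hj)
    have h3 := prod_map_mul_of_anticomm (k := k) y (x i) L fun j hj => by
      rw [hxy i j (hne j hj).symm, neg_neg]
    have h4 : x i * y i * x i = x i := by
      rw [mul_assoc, eq_sub_of_add_eq' (hpair i), mul_sub, ← mul_assoc, hx, zero_mul, mul_one,
        sub_zero]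
    have hexp : (L.length + 1) * (L.length + 1 - 1) / 2 =
        L.length + L.length * (L.length - 1) / 2 := by
      rw [← Nat.choose_two_right, ← Nat.choose_two_right, Nat.choose_succ_succ' _ 1,
        Nat.choose_one_right]
    rw [List.map_cons, List.map_cons, List.prod_cons, List.prod_cons, List.length_cons, hexp,
      pow_add]
    generalize (L.map x).prod = X at *
    generalize (L.map y).prod = Y at *
    have hs : (-1 : k) ^ L.length * (-1 : k) ^ L.length = 1 := by
      rw [← mul_pow]; simp
    have h5 : X * Y * x i = x i * (X * Y) := by
      rw [mul_assoc, h3, mul_smul_comm, ← mul_assoc, h1, smul_mul_assoc, smul_smul, hs, one_smul,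
        mul_assoc]
    calc x i * X * (y i * Y) * (x i * X) = x i * (X * y i) * Y * x i * X := by noncomm_ring
      _ = (-1 : k) ^ L.length • (x i * y i * (X * Y * x i) * X) := by
        rw [h2]; simp only [mul_smul_comm, smul_mul_assoc, mul_assoc]
      _ = (-1 : k) ^ L.length • (x i * y i * x i * (X * Y * X)) := by
        rw [h5]; simp only [mul_assoc]
      _ = _ := by rw [h4, ih, mul_smul_comm, smul_smul]

end Abstract

section Generators

variable (k : Type*) [Field k] (m : ℕ)

theorem hypQ_apply (v : (Fin m ⊕ Fin m) → k) :
    hypQ k m v = ∑ i : Fin m, v (Sum.inl i) * v (Sum.inr i) := by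
  simp [hypQ]

/-- The generator `ι(b_{m+i})`. -/
abbrev genF (i : Fin m) : CliffordAlgebra (hypQ k m) :=
  CliffordAlgebra.ι (hypQ k m) (Pi.single (Sum.inr i) (1 : k))

/-- The generator `ι(b_i)`. -/
abbrev genH (i : Fin m) : CliffordAlgebra (hypQ k m) :=
  CliffordAlgebra.ι (hypQ k m) (Pi.single (Sum.inl i) (1 : k))

theorem genF_sq (i : Fin m) : genF k m i * genF k m i = 0 := by
  rw [CliffordAlgebra.ι_sq_scalar, hypQ_apply]
  simp

theorem genH_sq (i : Fin m) : genH k m i * genH k m i = 0 := by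
  rw [CliffordAlgebra.ι_sq_scalar, hypQ_apply]
  simp

theorem genF_anticomm (i j : Fin m) (_ : i ≠ j) :
    genF k m i * genF k m j = -(genF k m j * genF k m i) := by
  apply CliffordAlgebra.ι_mul_ι_comm_of_isOrtho
  rw [QuadraticMap.isOrtho_def]
  simp [hypQ_apply]

theorem genH_anticomm (i j : Fin m) (_ : i ≠ j) :
    genH k m i * genH k m j = -(genH k m j * genH k m i) := by
  apply CliffordAlgebra.ι_mul_ι_comm_of_isOrtho
  rw [QuadraticMap.isOrtho_def]
  simp [hypQ_apply]

theorem genF_genH_anticomm {i j : Fin m} (hij : i ≠ j) :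
    genF k m i * genH k m j = -(genH k m j * genF k m i) := by
  apply CliffordAlgebra.ι_mul_ι_comm_of_isOrtho
  rw [QuadraticMap.isOrtho_def]
  simp [hypQ_apply, Pi.single_apply, hij]

theorem genF_genH_add_swap (i : Fin m) :
    genF k m i * genH k m i + genH k m i * genF k m i = 1 := by
  rw [CliffordAlgebra.ι_mul_ι_add_swap, QuadraticMap.polar]
  simp [hypQ_apply, Pi.single_apply]

end Generators

/-- in the Clifford algebra of the hyperbolic form
`Q(y) = Σ y_i y_{m+i}` on `k^{2m}`, with `f = ι(b_{m+1})⋯ι(b_{2m})` and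
`h = ι(b₁)⋯ι(b_m)`, for all `a, b` one has
`(a·f + b·h)·(f·h + h·f) = (-1)^{m(m-1)/2}·(a·f + b·h)`. -/
theorem cliff_af_bh_mul_fh_hf (k : Type*) [Field k] [CharZero k] (m : ℕ) (hm : 1 ≤ m)
    (a b : CliffordAlgebra (hypQ k m)) :
    (a * cliffF k m + b * cliffH k m) * (cliffF k m * cliffH k m + cliffH k m * cliffF k m) =
      ((-1 : k) ^ (m * (m - 1) / 2)) • (a * cliffF k m + b * cliffH k m) := by
  have hF := prod_mul_prod_mul_prod_of_pairing (k := k) _ _ (genF_sq k m) (genF_anticomm k m)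
    (fun i j hij => genF_genH_anticomm k m hij) (genF_genH_add_swap k m)
    (List.finRange m) (List.nodup_finRange m)
  have hH := prod_mul_prod_mul_prod_of_pairing (k := k) _ _ (genH_sq k m) (genH_anticomm k m)
    (fun i j hij => by rw [genF_genH_anticomm k m hij.symm, neg_neg])
    (fun i => by rw [add_comm]; exact genF_genH_add_swap k m i)
    (List.finRange m) (List.nodup_finRange m)
  have hne : List.finRange m ≠ [] := by
    rw [Ne, List.finRange_eq_nil_iff]; omega
  have hFF := prod_mul_self_eq_zero _ (genF_sq k m) (genF_anticomm k m)
    (List.finRange m) hne (List.nodup_finRange m)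
  have hHH := prod_mul_self_eq_zero _ (genH_sq k m) (genH_anticomm k m)
    (List.finRange m) hne (List.nodup_finRange m)
  rw [List.length_finRange] at hF hH
  change cliffF k m * cliffH k m * cliffF k m = _ • cliffF k m at hF
  change cliffH k m * cliffF k m * cliffH k m = _ • cliffH k m at hH
  change cliffF k m * cliffF k m = 0 at hFF
  change cliffH k m * cliffH k m = 0 at hHH
  generalize cliffF k m = f at *
  generalize cliffH k m = h at *
  calc (a * f + b * h) * (f * h + h * f)
      = a * (f * f) * h + a * (f * h * f) + b * (h * f * h) + b * (h * h) * f := by noncomm_ring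
    _ = _ := by
      rw [hF, hH, hFF, hHH]
      simp only [mul_zero, zero_mul, zero_add, add_zero, mul_smul_comm, smul_add]
end
end
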